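/- For all integers m ≥ 1 and 0 ≤ ℓ ≤ m−1, (2/√(8m+4)) · ∑_{j=0}^{8m+3} χ_m^{(ℓ)}(j) · cos(2πj/(8m+4)) = −(2/√(2m+1)) · sin(π(ℓ+1)/(2m+1)). -/

import Mathlib

/-- The periodic function `χ_m^{(ℓ)}` of period `8m+4` from Hikami's strange identity for
the Kontsevich–Zagier series of the torus knot `T(2, 2m+1)`. -/
noncomputable def chiX (m ℓ : ℕ) (n : ℤ) : ℝ :=
  if n % (8 * m + 4) = (2 * m - 2 * ℓ - 1) % (8 * m + 4) ∨
      n % (8 * m + 4) = (6 * m + 2 * ℓ + 5) % (8 * m + 4) then -(1 / 2)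
  else if n % (8 * m + 4) = (2 * m + 2 * ℓ + 3) % (8 * m + 4) ∨
      n % (8 * m + 4) = (6 * m - 2 * ℓ + 1) % (8 * m + 4) then 1 / 2
  else 0

lemma chiX_eq (ℓ k j : ℕ) (hj : j < 8 * (ℓ + 1 + k) + 4) :
    chiX (ℓ + 1 + k) ℓ j =
      (if j = 2 * k + 1 then -(1 / 2 : ℝ) else 0)
      + (if j = 8 * ℓ + 6 * k + 11 then -(1 / 2 : ℝ) else 0)
      + (if j = 4 * ℓ + 2 * k + 5 then (1 / 2 : ℝ) else 0)
      + (if j = 4 * ℓ + 6 * k + 7 then (1 / 2 : ℝ) else 0) := by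
  unfold chiX
  push_cast
  rw [Int.emod_eq_of_lt (a := (j : ℤ)) (by omega) (by omega),
    Int.emod_eq_of_lt (a := (2 * (ℓ + 1 + k) - 2 * ℓ - 1 : ℤ)) (by omega) (by omega),
    Int.emod_eq_of_lt (a := (6 * (ℓ + 1 + k) + 2 * ℓ + 5 : ℤ)) (by omega) (by omega),
    Int.emod_eq_of_lt (a := (2 * (ℓ + 1 + k) + 2 * ℓ + 3 : ℤ)) (by omega) (by omega),
    Int.emod_eq_of_lt (a := (6 * (ℓ + 1 + k) - 2 * ℓ + 1 : ℤ)) (by omega) (by omega)]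
  split_ifs <;> first | omega | norm_num

/-- `G_{χ_m^{(ℓ)}}^{(1)}(1) = −(2/√(2m+1)) sin(π(ℓ+1)/(2m+1))` for all
`m ≥ 1` and `0 ≤ ℓ ≤ m−1`. -/
theorem G_chiX_one (m ℓ : ℕ) (hm : 1 ≤ m) (hℓ : ℓ ≤ m - 1) :
    (2 / Real.sqrt (8 * m + 4)) *
        ∑ j ∈ Finset.range (8 * m + 4),
          chiX m ℓ j * Real.cos (2 * Real.pi * j / (8 * m + 4))
      = -(2 / Real.sqrt (2 * m + 1)) * Real.sin (Real.pi * (ℓ + 1) / (2 * m + 1)) := by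
  obtain ⟨k, rfl⟩ : ∃ k, m = ℓ + 1 + k := ⟨m - (ℓ + 1), by omega⟩
  have hs : Real.sqrt (8 * ((ℓ + 1 + k : ℕ) : ℝ) + 4)
      = 2 * Real.sqrt (2 * ((ℓ + 1 + k : ℕ) : ℝ) + 1) := by
    rw [show (8 * ((ℓ + 1 + k : ℕ) : ℝ) + 4) = 2 ^ 2 * (2 * ((ℓ + 1 + k : ℕ) : ℝ) + 1) by ring,
      Real.sqrt_mul (by norm_num), Real.sqrt_sq (by norm_num)]
  have hsum : ∑ j ∈ Finset.range (8 * (ℓ + 1 + k) + 4),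
      chiX (ℓ + 1 + k) ℓ j * Real.cos (2 * Real.pi * j / (8 * ((ℓ + 1 + k : ℕ) : ℝ) + 4))
      = -2 * Real.sin (Real.pi * (ℓ + 1) / (2 * ((ℓ + 1 + k : ℕ) : ℝ) + 1)) := by
    rw [Finset.sum_congr rfl fun j hj => by rw [chiX_eq ℓ k j (Finset.mem_range.mp hj)]]
    simp only [add_mul, ite_mul, zero_mul, Finset.sum_add_distrib, Finset.sum_ite_eq',
      Finset.mem_range]
    rw [if_pos (by omega), if_pos (by omega), if_pos (by omega), if_pos (by omega)]
    push_cast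
    set x : ℝ := Real.pi * (ℓ + 1) / (2 * (ℓ + 1 + k) + 1) with hx
    have hp : (2 * ((ℓ : ℝ) + 1 + k) + 1) ≠ 0 := by positivity
    have hq : (8 * ((ℓ : ℝ) + 1 + k) + 4) ≠ 0 := by positivity
    have e1 : 2 * Real.pi * (2 * k + 1) / (8 * ((ℓ : ℝ) + 1 + k) + 4) = Real.pi / 2 - x := by
      rw [hx]; field_simp; ring
    have e2 : 2 * Real.pi * (8 * ℓ + 6 * k + 11) / (8 * ((ℓ : ℝ) + 1 + k) + 4)
        = (x + Real.pi / 2) + Real.pi := by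
      rw [hx]; field_simp; ring
    have e3 : 2 * Real.pi * (4 * ℓ + 2 * k + 5) / (8 * ((ℓ : ℝ) + 1 + k) + 4)
        = x + Real.pi / 2 := by
      rw [hx]; field_simp; ring
    have e4 : 2 * Real.pi * (4 * ℓ + 6 * k + 7) / (8 * ((ℓ : ℝ) + 1 + k) + 4)
        = (Real.pi / 2 - x) + Real.pi := by
      rw [hx]; field_simp; ring
    rw [e1, e2, e3, e4, Real.cos_add_pi, Real.cos_add_pi, Real.cos_add_pi_div_two,
      Real.cos_pi_div_two_sub]
    ring
  rw [hsum, hs]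
  have : Real.sqrt (2 * ((ℓ + 1 + k : ℕ) : ℝ) + 1) ≠ 0 := by positivity
  field_simp
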